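/- arXiv:1901.06118 — 4 statements merged into one kernel-verified Lean document; each statement's English description precedes it below -/
import Mathlib

section
/- Let α ∈ (0,1), let H be a complex Hilbert space and J a densely defined linear operator in H. Assume: (i) for each λ > 0 there is a bounded linear operator R_λ on H with ‖R_λ‖ ≤ 1/λ such that R_λ(J f + λ f) = f for every f ∈ D(J), and for every g ∈ H one has R_λ g ∈ D(J) with J(R_λ g) + λ R_λ g = g; (ii) there is a bounded linear operator B on H with ‖B‖ = b such that B(J f) = f for every f ∈ D(J), and for every g ∈ H one has B g ∈ D(J) with J(B g) = g. Then for every f ∈ H the function λ ↦ λ^{-α} R_λ f is Bochner integrable on (0, ∞) and ‖(sin(απ)/π) ∫₀^∞ λ^{-α} R_λ f dλ‖ ≤ (2(1-α)^{-1} b + α^{-1})·‖f‖. -/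
open MeasureTheory Real Set

/-!
The resolvents satisfy `t ‖R t‖ ≤ M`, which makes `t ^ (-α) • R t f` integrable at infinity. Near
`0` this estimate is too weak, but `J (R t g) = g - t • R t g` has norm at most `(1 + M) ‖g‖`, so
the bounded inverse of `J` gives `‖R t‖ ≤ (1 + M) b` uniformly in `t`. Splitting the integral at
`t = 1` produces the two terms of the bound. Measurability of the integrand comes from the resolvent
identity, which makes `R` a Lipschitz function of `t⁻¹`.
-/

section RpowSMul

variable {E : Type*} [NormedAddCommGroup E] [NormedSpace ℝ E] {α c C C₀ C₁ : ℝ} {F : ℝ → E}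

theorem integrableOn_Ioc_rpow_neg (hα : α < 1) :
    IntegrableOn (fun t : ℝ ↦ t ^ (-α)) (Ioc 0 c) :=
  (intervalIntegral.intervalIntegrable_rpow' (by linarith)).1

theorem integral_Ioc_rpow_neg (hα : α < 1) (hc : 0 ≤ c) :
    ∫ t in Ioc 0 c, t ^ (-α) = c ^ (1 - α) / (1 - α) := by
  rw [← intervalIntegral.integral_of_le hc, integral_rpow (Or.inl (by linarith)),
    neg_add_eq_sub, zero_rpow (by linarith), sub_zero]

theorem integral_Ioi_rpow_neg_sub_one (hα : 0 < α) (hc : 0 < c) :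
    ∫ t in Ioi c, t ^ (-α - 1) = c ^ (-α) / α := by
  rw [integral_Ioi_rpow_of_lt (by linarith) hc, sub_add_cancel, neg_div_neg_eq]

theorem ae_Ioc_norm_rpow_neg_smul_le (hF : ∀ t ∈ Ioc 0 c, ‖F t‖ ≤ C) :
    ∀ᵐ t ∂volume.restrict (Ioc 0 c), ‖t ^ (-α) • F t‖ ≤ t ^ (-α) * C := by
  filter_upwards [ae_restrict_mem measurableSet_Ioc] with t ht
  have hpow : 0 ≤ t ^ (-α) := rpow_nonneg ht.1.le _
  rw [norm_smul, norm_of_nonneg hpow]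
  gcongr
  exact hF t ht

theorem ae_Ioi_norm_rpow_neg_smul_le (hc : 0 ≤ c) (hF : ∀ t ∈ Ioi c, ‖F t‖ ≤ C / t) :
    ∀ᵐ t ∂volume.restrict (Ioi c), ‖t ^ (-α) • F t‖ ≤ t ^ (-α - 1) * C := by
  filter_upwards [ae_restrict_mem measurableSet_Ioi] with t ht
  have ht0 : 0 < t := hc.trans_lt ht
  have hpow : 0 ≤ t ^ (-α) := rpow_nonneg ht0.le _
  rw [norm_smul, norm_of_nonneg hpow, rpow_sub_one ht0.ne', div_mul_eq_mul_div, mul_div_assoc]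
  gcongr
  exact hF t ht

theorem integrableOn_Ioc_rpow_neg_smul (hα : α < 1)
    (hFm : AEStronglyMeasurable F (volume.restrict (Ioc 0 c)))
    (hF : ∀ t ∈ Ioc 0 c, ‖F t‖ ≤ C) :
    IntegrableOn (fun t : ℝ ↦ t ^ (-α) • F t) (Ioc 0 c) :=
  ((integrableOn_Ioc_rpow_neg hα).mul_const C).mono'
    ((measurable_id.pow_const (-α)).aestronglyMeasurable.smul hFm)
    (ae_Ioc_norm_rpow_neg_smul_le hF)

theorem integrableOn_Ioi_rpow_neg_smul (hα : 0 < α) (hc : 0 < c)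
    (hFm : AEStronglyMeasurable F (volume.restrict (Ioi c)))
    (hF : ∀ t ∈ Ioi c, ‖F t‖ ≤ C / t) :
    IntegrableOn (fun t : ℝ ↦ t ^ (-α) • F t) (Ioi c) :=
  ((integrableOn_Ioi_rpow_of_lt (by linarith) hc).mul_const C).mono'
    ((measurable_id.pow_const (-α)).aestronglyMeasurable.smul hFm)
    (ae_Ioi_norm_rpow_neg_smul_le hc.le hF)

theorem norm_integral_Ioc_rpow_neg_smul_le (hα : α < 1) (hc : 0 ≤ c)
    (hF : ∀ t ∈ Ioc 0 c, ‖F t‖ ≤ C) :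
    ‖∫ t in Ioc 0 c, t ^ (-α) • F t‖ ≤ c ^ (1 - α) / (1 - α) * C := by
  rw [← integral_Ioc_rpow_neg hα hc, ← integral_mul_const]
  exact norm_integral_le_of_norm_le ((integrableOn_Ioc_rpow_neg hα).mul_const C)
    (ae_Ioc_norm_rpow_neg_smul_le hF)

theorem norm_integral_Ioi_rpow_neg_smul_le (hα : 0 < α) (hc : 0 < c)
    (hF : ∀ t ∈ Ioi c, ‖F t‖ ≤ C / t) :
    ‖∫ t in Ioi c, t ^ (-α) • F t‖ ≤ c ^ (-α) / α * C := by
  rw [← integral_Ioi_rpow_neg_sub_one hα hc, ← integral_mul_const]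
  exact norm_integral_le_of_norm_le
    ((integrableOn_Ioi_rpow_of_lt (by linarith) hc).mul_const C)
    (ae_Ioi_norm_rpow_neg_smul_le hc.le hF)

theorem integrableOn_Ioi_zero_rpow_neg_smul (hα : α ∈ Ioo 0 1) (hc : 0 < c)
    (hFm : AEStronglyMeasurable F (volume.restrict (Ioi 0)))
    (hF₀ : ∀ t ∈ Ioc 0 c, ‖F t‖ ≤ C₀) (hF₁ : ∀ t ∈ Ioi c, ‖F t‖ ≤ C₁ / t) :
    IntegrableOn (fun t : ℝ ↦ t ^ (-α) • F t) (Ioi 0) := by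
  rw [← Ioc_union_Ioi_eq_Ioi hc.le]
  exact (integrableOn_Ioc_rpow_neg_smul hα.2 (hFm.mono_set Ioc_subset_Ioi_self) hF₀).union
    (integrableOn_Ioi_rpow_neg_smul hα.1 hc (hFm.mono_set (Ioi_subset_Ioi hc.le)) hF₁)

theorem norm_integral_Ioi_zero_rpow_neg_smul_le (hα : α ∈ Ioo 0 1) (hc : 0 < c)
    (hFm : AEStronglyMeasurable F (volume.restrict (Ioi 0)))
    (hF₀ : ∀ t ∈ Ioc 0 c, ‖F t‖ ≤ C₀) (hF₁ : ∀ t ∈ Ioi c, ‖F t‖ ≤ C₁ / t) :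
    ‖∫ t in Ioi 0, t ^ (-α) • F t‖ ≤ c ^ (1 - α) / (1 - α) * C₀ + c ^ (-α) / α * C₁ := by
  have hint := integrableOn_Ioi_zero_rpow_neg_smul hα hc hFm hF₀ hF₁
  rw [← Ioc_union_Ioi_eq_Ioi hc.le, setIntegral_union Ioc_disjoint_Ioi_same measurableSet_Ioi
    (hint.mono_set Ioc_subset_Ioi_self) (hint.mono_set (Ioi_subset_Ioi hc.le))]
  exact norm_add_le_of_le (norm_integral_Ioc_rpow_neg_smul_le hα.2 hc.le hF₀)
    (norm_integral_Ioi_rpow_neg_smul_le hα.1 hc hF₁)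

end RpowSMul

section Resolvent

open Filter Topology

variable {𝕜 E : Type*} [RCLike 𝕜] [NormedAddCommGroup E] [NormedSpace 𝕜 E]

theorem norm_sub_smul_apply_le {T : E →L[𝕜] E} {M t : ℝ} (ht : 0 < t) (hT : ‖T‖ ≤ M / t) (g : E) :
    ‖g - (t : 𝕜) • T g‖ ≤ (1 + M) * ‖g‖ :=
  calc ‖g - (t : 𝕜) • T g‖ ≤ ‖g‖ + t * ‖T g‖ := by
        simpa only [norm_smul, RCLike.norm_ofReal, abs_of_pos ht] using
          norm_sub_le g ((t : 𝕜) • T g)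
    _ ≤ ‖g‖ + t * (M / t * ‖g‖) := by
        gcongr
        exact T.le_of_opNorm_le hT g
    _ = (1 + M) * ‖g‖ := by field_simp

/-- `R t` is the two-sided inverse of `t + J` for every `t > 0`. The sign convention is the one for
accretive `J`, whose resolvent set contains the negative half-line; `R t` is unconstrained for
`t ≤ 0`. -/
structure IsResolventFamily (J : E →ₗ.[𝕜] E) (R : ℝ → E →L[𝕜] E) : Prop where
  left_inv : ∀ t : ℝ, 0 < t → ∀ f : J.domain, R t (J f + (t : 𝕜) • (f : E)) = f
  right_inv : ∀ t : ℝ, 0 < t → ∀ g : E,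
    ∃ hg : R t g ∈ J.domain, J ⟨R t g, hg⟩ + (t : 𝕜) • R t g = g

namespace IsResolventFamily

variable {J : E →ₗ.[𝕜] E} {R : ℝ → E →L[𝕜] E} {M b s t : ℝ}

theorem sub_eq_smul_comp (h : IsResolventFamily J R) (hs : 0 < s) (ht : 0 < t) :
    R s - R t = ((t : 𝕜) - s) • (R s ∘L R t) := by
  ext g
  obtain ⟨hg, hJ⟩ := h.right_inv t ht g
  have hRt : R s (g - (t : 𝕜) • R t g + (s : 𝕜) • R t g) = R t g := by
    simpa only [eq_sub_of_add_eq hJ] using h.left_inv s hs ⟨R t g, hg⟩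
  calc R s g - R t g
      = R s g - R s (g - (t : 𝕜) • R t g + (s : 𝕜) • R t g) := by rw [hRt]
    _ = ((t : 𝕜) - s) • R s (R t g) := by
      simp only [map_add, map_sub, map_smul, sub_smul]
      abel

theorem dist_le (h : IsResolventFamily J R) (hs : 0 < s) (ht : 0 < t)
    (hRs : ‖R s‖ ≤ M / s) (hRt : ‖R t‖ ≤ M / t) :
    dist (R s) (R t) ≤ M ^ 2 * dist s⁻¹ t⁻¹ := by
  calc dist (R s) (R t) = |t - s| * ‖R s ∘L R t‖ := by
        rw [dist_eq_norm, h.sub_eq_smul_comp hs ht, norm_smul, ← RCLike.ofReal_sub,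
          RCLike.norm_ofReal]
    _ ≤ |t - s| * (M / s * (M / t)) := by
        gcongr
        exact ((R s).opNorm_comp_le (R t)).trans
          (mul_le_mul hRs hRt (norm_nonneg _) ((norm_nonneg _).trans hRs))
    _ = M ^ 2 * dist s⁻¹ t⁻¹ := by
        rw [Real.dist_eq, inv_sub_inv hs.ne' ht.ne', abs_div, abs_of_pos (mul_pos hs ht)]
        ring

theorem continuousOn (h : IsResolventFamily J R) (hR : ∀ t : ℝ, 0 < t → ‖R t‖ ≤ M / t) :
    ContinuousOn R (Ioi 0) := by
  intro t ht
  have hinv : Tendsto (fun s : ℝ ↦ M ^ 2 * dist s⁻¹ t⁻¹) (𝓝[Ioi 0] t) (𝓝 0) := by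
    have hinv_dist : Tendsto (fun s : ℝ ↦ dist s⁻¹ t⁻¹) (𝓝[Ioi 0] t) (𝓝 0) :=
      tendsto_iff_dist_tendsto_zero.1 (continuousAt_inv₀ (ne_of_gt ht)).continuousWithinAt
    simpa only [mul_zero] using hinv_dist.const_mul (M ^ 2)
  refine tendsto_iff_dist_tendsto_zero.2 (squeeze_zero' ?_ ?_ hinv)
  · exact .of_forall fun _ ↦ dist_nonneg
  · filter_upwards [self_mem_nhdsWithin] with s hs
    exact h.dist_le hs ht (hR s hs) (hR t ht)

theorem norm_apply_le (h : IsResolventFamily J R) (ht : 0 < t) (hR : ‖R t‖ ≤ M / t)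
    (hb : 0 ≤ b) (hJ : ∀ f : J.domain, ‖(f : E)‖ ≤ b * ‖J f‖) (g : E) :
    ‖R t g‖ ≤ (1 + M) * b * ‖g‖ := by
  obtain ⟨hg, hJg⟩ := h.right_inv t ht g
  calc ‖R t g‖ ≤ b * ‖J ⟨R t g, hg⟩‖ := hJ ⟨R t g, hg⟩
    _ = b * ‖g - (t : 𝕜) • R t g‖ := by rw [eq_sub_of_add_eq hJg]
    _ ≤ b * ((1 + M) * ‖g‖) := by
        gcongr
        exact norm_sub_smul_apply_le ht hR g
    _ = (1 + M) * b * ‖g‖ := by ring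

end IsResolventFamily

end Resolvent

theorem norm_sin_div_pi_le_one (x : ℝ) : ‖Real.sin x / π‖ ≤ 1 := by
  rw [norm_div, norm_of_nonneg pi_pos.le, div_le_one pi_pos]
  exact (abs_sin_le_one x).trans (by linarith [pi_gt_three])

theorem fractional_negative_power_bounded_general
    {𝕜 E : Type*} [RCLike 𝕜] [NormedAddCommGroup E] [NormedSpace 𝕜 E] [NormedSpace ℝ E]
    [CompleteSpace E] {α M b : ℝ} (hα : α ∈ Ioo 0 1) {J : E →ₗ.[𝕜] E} {R : ℝ → E →L[𝕜] E}
    (h : IsResolventFamily J R) (hR : ∀ t : ℝ, 0 < t → ‖R t‖ ≤ M / t)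
    (hb : 0 ≤ b) (hJ : ∀ f : J.domain, ‖(f : E)‖ ≤ b * ‖J f‖) (f : E) :
    IntegrableOn (fun t : ℝ ↦ t ^ (-α) • R t f) (Ioi 0) ∧
      ‖(Real.sin (α * π) / π) • ∫ t in Ioi 0, t ^ (-α) • R t f‖ ≤
        ((1 + M) * (1 - α)⁻¹ * b + M * α⁻¹) * ‖f‖ := by
  have hmeas : AEStronglyMeasurable (fun t ↦ R t f) (volume.restrict (Ioi 0)) :=
    ((h.continuousOn hR).clm_apply continuousOn_const).aestronglyMeasurable measurableSet_Ioi
  have hzero : ∀ t ∈ Ioc (0 : ℝ) 1, ‖R t f‖ ≤ (1 + M) * b * ‖f‖ := fun t ht ↦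
    h.norm_apply_le ht.1 (hR t ht.1) hb hJ f
  have hinfty : ∀ t ∈ Ioi (1 : ℝ), ‖R t f‖ ≤ M * ‖f‖ / t := fun t ht ↦
    ((R t).le_of_opNorm_le (hR t (one_pos.trans ht)) f).trans_eq (div_mul_eq_mul_div ..)
  refine ⟨integrableOn_Ioi_zero_rpow_neg_smul hα one_pos hmeas hzero hinfty, ?_⟩
  calc ‖(Real.sin (α * π) / π) • ∫ t in Ioi 0, t ^ (-α) • R t f‖
      ≤ ‖∫ t in Ioi 0, t ^ (-α) • R t f‖ := by
        rw [norm_smul]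
        exact mul_le_of_le_one_left (norm_nonneg _) (norm_sin_div_pi_le_one _)
    _ ≤ 1 ^ (1 - α) / (1 - α) * ((1 + M) * b * ‖f‖) + 1 ^ (-α) / α * (M * ‖f‖) :=
        norm_integral_Ioi_zero_rpow_neg_smul_le hα one_pos hmeas hzero hinfty
    _ = ((1 + M) * (1 - α)⁻¹ * b + M * α⁻¹) * ‖f‖ := by
        rw [one_rpow, one_rpow]
        ring

/-- If `J` is a densely defined m-accretive operator (with resolvents `R λ`
satisfying `‖R λ‖ ≤ 1/λ`) having a bounded inverse `B` with `‖B‖ = b`, then for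
`α ∈ (0,1)` the Balakrishnan integral defining `J^{-α}` converges (Bochner) on `(0,∞)`
for each `f`, and its value is bounded by `(2(1-α)⁻¹ b + α⁻¹)‖f‖`. -/
theorem fractional_negative_power_bounded
    {H : Type*} [NormedAddCommGroup H] [InnerProductSpace ℂ H] [CompleteSpace H]
    (α : ℝ) (hα : α ∈ Set.Ioo (0 : ℝ) 1)
    (J : H →ₗ.[ℂ] H) (hdense : Dense (J.domain : Set H))
    (R : ℝ → H →L[ℂ] H)
    (hRnorm : ∀ lam : ℝ, 0 < lam → ‖R lam‖ ≤ 1 / lam)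
    (hRleft : ∀ lam : ℝ, 0 < lam → ∀ f : J.domain,
      R lam (J f + (lam : ℂ) • (f : H)) = f)
    (hRright : ∀ lam : ℝ, 0 < lam → ∀ g : H,
      ∃ hg : R lam g ∈ J.domain, J ⟨R lam g, hg⟩ + (lam : ℂ) • R lam g = g)
    (B : H →L[ℂ] H) (b : ℝ) (hb : ‖B‖ = b)
    (hBleft : ∀ f : J.domain, B (J f) = f)
    (hBright : ∀ g : H, ∃ hg : B g ∈ J.domain, J ⟨B g, hg⟩ = g) :
    ∀ f : H,
      IntegrableOn (fun lam : ℝ => lam ^ (-α) • R lam f) (Ioi (0 : ℝ)) volume ∧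
      ‖(Real.sin (α * π) / π) • ∫ lam in Ioi (0 : ℝ), lam ^ (-α) • R lam f‖ ≤
        (2 * (1 - α)⁻¹ * b + α⁻¹) * ‖f‖ := by
  intro f
  have hJ : ∀ g : J.domain, ‖(g : H)‖ ≤ b * ‖J g‖ := fun g ↦ by
    simpa only [hBleft, hb] using B.le_opNorm (J g)
  simpa only [one_add_one_eq_two, one_mul] using
    fractional_negative_power_bounded_general hα ⟨hRleft, hRright⟩ hRnorm (hb ▸ norm_nonneg B) hJ f
end

section
/- Let H be a complex Hilbert space, V ⊆ H a subspace, p : V → ℝ a nonnegative function, W : V → H a linear map, and C₀, C₁, C₂ > 0 constants such that for all f, g ∈ V: ‖f‖ ≤ C₀·p(f), |⟨W f, g⟩| ≤ C₁·p(f)·p(g), and Re⟨W f, f⟩ ≥ C₂·p(f)². Then for every ε ∈ (0,1) and every f ∈ V one has Re⟨W f, f⟩ − (ε C₂ / C₁)·|Im⟨W f, f⟩| ≥ (C₂(1−ε)/C₀²)·‖f‖². In particular the numerical range of W lies in a sector of the form {ζ : |arg(ζ − γ)| ≤ θ < π/2} with vertex γ = C₂(1−ε)/C₀² > 0. -/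
open scoped InnerProductSpace

/-!
The coercive lower bound `C₂ p(f)²` for `Re⟪Wf,f⟫` is split in the ratio `ε : 1 - ε`. The first part
absorbs `(εC₂/C₁)|Im⟪Wf,f⟫|`, because `|Im⟪Wf,f⟫| ≤ C₁ p(f)²`; the second part dominates
`(C₂(1-ε)/C₀²)‖f‖²` by the embedding inequality.
-/

section OrderedField

variable {K : Type*} [Field K] [LinearOrder K] [IsStrictOrderedRing K]

theorem mul_one_sub_mul_le_sub_div_mul {a b c d q ε : K} (hc : 0 < c) (hεd : 0 ≤ ε * d)
    (ha : d * q ≤ a) (hb : b ≤ c * q) : d * (1 - ε) * q ≤ a - ε * d / c * b := by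
  have absorb : ε * d / c * b ≤ ε * d * q :=
    calc ε * d / c * b ≤ ε * d / c * (c * q) := by gcongr
      _ = ε * d * q := by field_simp
  linarith

theorem div_sq_mul_sq_le_mul_sq {a c d r : K} (ha : 0 ≤ a) (hc : 0 < c) (hd : 0 ≤ d)
    (har : a ≤ c * r) : d / c ^ 2 * a ^ 2 ≤ d * r ^ 2 :=
  calc d / c ^ 2 * a ^ 2 ≤ d / c ^ 2 * (c * r) ^ 2 := by gcongr
    _ = d * r ^ 2 := by field_simp

end OrderedField

theorem sectorial_estimate_general {𝕜 E : Type*} [RCLike 𝕜] [SeminormedAddCommGroup E]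
    [InnerProductSpace 𝕜 E] (V : Set E) (p : V → ℝ) (W : V → E) {C₀ C₁ C₂ : ℝ}
    (hC₀ : 0 < C₀) (hC₁ : 0 < C₁) (hC₂ : 0 ≤ C₂)
    (hembed : ∀ f : V, ‖(f : E)‖ ≤ C₀ * p f)
    (him : ∀ f : V, |RCLike.im ⟪W f, (f : E)⟫_𝕜| ≤ C₁ * p f ^ 2)
    (hcoerc : ∀ f : V, C₂ * p f ^ 2 ≤ RCLike.re ⟪W f, (f : E)⟫_𝕜)
    {ε : ℝ} (hε : ε ∈ Set.Icc (0 : ℝ) 1) (f : V) :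
    C₂ * (1 - ε) / C₀ ^ 2 * ‖(f : E)‖ ^ 2 ≤
      RCLike.re ⟪W f, (f : E)⟫_𝕜 - ε * C₂ / C₁ * |RCLike.im ⟪W f, (f : E)⟫_𝕜| :=
  calc C₂ * (1 - ε) / C₀ ^ 2 * ‖(f : E)‖ ^ 2
      ≤ C₂ * (1 - ε) * p f ^ 2 :=
        div_sq_mul_sq_le_mul_sq (norm_nonneg _) hC₀ (mul_nonneg hC₂ (sub_nonneg.2 hε.2)) (hembed f)
    _ ≤ RCLike.re ⟪W f, (f : E)⟫_𝕜 - ε * C₂ / C₁ * |RCLike.im ⟪W f, (f : E)⟫_𝕜| :=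
        mul_one_sub_mul_le_sub_div_mul hC₁ (mul_nonneg hε.1 hC₂) (hcoerc f) (him f)

/-- Under the embedding inequality `‖f‖ ≤ C₀ p(f)` and conditions H2
(`|⟪Wf,g⟫| ≤ C₁ p(f) p(g)`, `Re⟪Wf,f⟫ ≥ C₂ p(f)²`), the numerical range estimate
`Re⟪Wf,f⟫ − (εC₂/C₁)|Im⟪Wf,f⟫| ≥ (C₂(1−ε)/C₀²)‖f‖²` holds for every `ε ∈ (0,1)`. -/
theorem sectorial_estimate
    {H : Type*} [NormedAddCommGroup H] [InnerProductSpace ℂ H] [CompleteSpace H]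
    (V : Submodule ℂ H) (p : V → ℝ) (hp : ∀ f : V, 0 ≤ p f)
    (W : V →ₗ[ℂ] H) (C₀ C₁ C₂ : ℝ) (hC₀ : 0 < C₀) (hC₁ : 0 < C₁) (hC₂ : 0 < C₂)
    (hembed : ∀ f : V, ‖(f : H)‖ ≤ C₀ * p f)
    (hbound : ∀ f g : V, ‖(⟪W f, (g : H)⟫_ℂ)‖ ≤ C₁ * p f * p g)
    (hcoerc : ∀ f : V, C₂ * (p f) ^ 2 ≤ (⟪W f, (f : H)⟫_ℂ).re) :
    ∀ ε : ℝ, ε ∈ Set.Ioo (0 : ℝ) 1 → ∀ f : V,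
      (C₂ * (1 - ε) / C₀ ^ 2) * ‖(f : H)‖ ^ 2 ≤
        (⟪W f, (f : H)⟫_ℂ).re - (ε * C₂ / C₁) * |(⟪W f, (f : H)⟫_ℂ).im| := by
  have him (f : V) : |(⟪W f, (f : H)⟫_ℂ).im| ≤ C₁ * p f ^ 2 :=
    (Complex.abs_im_le_norm _).trans ((hbound f f).trans_eq (by ring))
  exact fun ε hε f ↦ sectorial_estimate_general (𝕜 := ℂ) (V : Set H) p W hC₀ hC₁ hC₂.le
    hembed him hcoerc (Set.Ioo_subset_Icc_self hε) f
end

section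
/- For t > 0 let N_t(x) = (2πt)^{-1/2}·exp(−x²/(2t)). Then for every smooth compactly supported function f : ℝ → ℂ, ‖(N_t ⋆ f − f)/t − (1/2)·f″‖_{L²(ℝ)} → 0 as t → 0⁺. Thus the infinitesimal generator −A of the Gauss–Weierstrass semigroup satisfies A f = −(1/2) f″ for smooth compactly supported f. -/
open MeasureTheory Real Filter Topology

/-- The Gauss–Weierstrass kernel `N_t(x) = (2πt)^{-1/2} exp(−x²/(2t))`. -/
noncomputable def gaussKernel (t x : ℝ) : ℝ :=
  (Real.sqrt (2 * π * t))⁻¹ * Real.exp (-x ^ 2 / (2 * t))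

/-!
`(N_t ⋆ f)(x)` is the mean of `f` under the normal law with mean `x` and variance `t`. Taylor's
formula of order two at `x` therefore gives `(N_t ⋆ f)(x) - f x = (t / 2) f″(x)` plus an error
governed by the modulus of continuity of `f″`. Since `(1 + x²) f″` vanishes at infinity, for every
`ε > 0` that modulus is at most `(ε + C h²) / (1 + x²)` at distance `h` from `x`. The quadratic term
in `h` meets the fourth central moment, of order `t²`, so the error divided by `t` is at most
`(ε + O(t)) / (1 + x²)`, and `(1 + x²)⁻¹` lies in every `L^p` with `p ≥ 1`.
-/

open ProbabilityTheory ZeroAtInfty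

section ModulusOfContinuity

lemma exists_dist_le_add_mul_dist_sq {α β : Type*} [PseudoMetricSpace α] [PseudoMetricSpace β]
    {g : α → β} (hg : UniformContinuous g) {B : ℝ} (hB : ∀ x y, dist (g x) (g y) ≤ B)
    {ε : ℝ} (hε : 0 < ε) :
    ∃ C, 0 ≤ C ∧ ∀ x y, dist (g x) (g y) ≤ ε + C * dist x y ^ 2 := by
  obtain ⟨δ, hδ, hclose⟩ := Metric.uniformContinuous_iff.1 hg ε hε
  refine ⟨|B| / δ ^ 2, by positivity, fun x y => ?_⟩
  rcases lt_or_ge (dist x y) δ with hnear | hfar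
  · exact (hclose hnear).le.trans (le_add_of_nonneg_right (by positivity))
  · calc dist (g x) (g y) ≤ |B| := (hB x y).trans (le_abs_self B)
      _ = |B| / δ ^ 2 * δ ^ 2 := by field_simp
      _ ≤ |B| / δ ^ 2 * dist x y ^ 2 := by gcongr
      _ ≤ ε + |B| / δ ^ 2 * dist x y ^ 2 := le_add_of_nonneg_left hε.le

variable {E : Type*} [NormedAddCommGroup E] [NormedSpace ℝ E]

lemma one_add_sq_mul_norm_sub_le (g : ℝ → E) (x y : ℝ) :
    (1 + x ^ 2) * ‖g y - g x‖ ≤ ‖(1 + y ^ 2) • g y - (1 + x ^ 2) • g x‖ +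
      (|y - x| + |y - x| ^ 2) * ‖(1 + y ^ 2) • g y‖ := by
  have hfactor : |(y - x) * (y + x)| ≤ (|y - x| + |y - x| ^ 2) * (1 + y ^ 2) := by
    have hsum : |y + x| ≤ 1 + y ^ 2 + |y - x| := by
      calc |y + x| = |2 * y - (y - x)| := by ring_nf
        _ ≤ |2 * y| + |y - x| := abs_sub _ _
        _ ≤ 1 + y ^ 2 + |y - x| := by
          gcongr
          rw [abs_mul, abs_two, ← sq_abs y]
          linarith [two_mul_le_add_sq 1 |y|]
    rw [abs_mul]
    nlinarith [mul_le_mul_of_nonneg_left hsum (abs_nonneg (y - x)),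
      mul_nonneg (sq_nonneg |y - x|) (sq_nonneg y)]
  calc (1 + x ^ 2) * ‖g y - g x‖
      = ‖((1 + y ^ 2) • g y - (1 + x ^ 2) • g x) - ((y - x) * (y + x)) • g y‖ := by
        rw [← norm_smul_of_nonneg (by positivity)]
        congr 1
        module
    _ ≤ ‖(1 + y ^ 2) • g y - (1 + x ^ 2) • g x‖ + |(y - x) * (y + x)| * ‖g y‖ := by
        rw [← Real.norm_eq_abs, ← norm_smul]
        exact norm_sub_le _ _
    _ ≤ ‖(1 + y ^ 2) • g y - (1 + x ^ 2) • g x‖ +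
          (|y - x| + |y - x| ^ 2) * (1 + y ^ 2) * ‖g y‖ := by gcongr
    _ = _ := by rw [norm_smul_of_nonneg (by positivity) (g y), mul_assoc]

lemma exists_norm_sub_le_mul_inv_one_add_sq {g : ℝ → E} (hg : Continuous g)
    (hdecay : Tendsto (fun x => (1 + x ^ 2) • g x) (cocompact ℝ) (𝓝 0)) {ε : ℝ} (hε : 0 < ε) :
    ∃ C, 0 ≤ C ∧ ∀ x y, ‖g y - g x‖ ≤ (ε + C * (y - x) ^ 2) * (1 + x ^ 2)⁻¹ := by
  let G : C₀(ℝ, E) := ⟨⟨fun x => (1 + x ^ 2) • g x, by fun_prop⟩, hdecay⟩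
  have hG : ∀ x, ‖G x‖ ≤ ‖G.toBCF‖ := G.toBCF.norm_coe_le_norm
  set B := ‖G.toBCF‖
  obtain ⟨C, hC, hmod⟩ := exists_dist_le_add_mul_dist_sq
    (ZeroAtInftyContinuousMap.uniformContinuous G) G.toBCF.dist_le_two_norm (half_pos hε)
  refine ⟨C + B + B ^ 2 / (2 * ε), by positivity, fun x y => ?_⟩
  have hamgm : |y - x| * B ≤ ε / 2 + B ^ 2 / (2 * ε) * |y - x| ^ 2 := by
    have := two_mul_le_add_sq ε (|y - x| * B)
    field_simp
    linarith
  rw [← div_eq_mul_inv, le_div_iff₀' (by positivity)]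
  calc (1 + x ^ 2) * ‖g y - g x‖
      ≤ ‖G y - G x‖ + (|y - x| + |y - x| ^ 2) * ‖G y‖ := one_add_sq_mul_norm_sub_le g x y
    _ ≤ (ε / 2 + C * |y - x| ^ 2) + (|y - x| + |y - x| ^ 2) * B := by
        gcongr
        · simpa [dist_eq_norm] using hmod y x
        · exact hG y
    _ ≤ ε + (C + B + B ^ 2 / (2 * ε)) * |y - x| ^ 2 := by linarith
    _ = ε + (C + B + B ^ 2 / (2 * ε)) * (y - x) ^ 2 := by rw [sq_abs]

end ModulusOfContinuity

section Taylor

variable {E : Type*} [NormedAddCommGroup E] [NormedSpace ℝ E] {f f' f'' : ℝ → E}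

lemma norm_sub_taylor_two_le (hf : ∀ x, HasDerivAt f (f' x) x)
    (hf' : ∀ x, HasDerivAt f' (f'' x) x) {x y D : ℝ}
    (hD : ∀ z ∈ Set.uIcc x y, ‖f'' z - f'' x‖ ≤ D) :
    ‖f y - f x - (y - x) • f' x - ((y - x) ^ 2 / 2) • f'' x‖ ≤ D * (y - x) ^ 2 := by
  have hconvex : Convex ℝ (Set.uIcc x y) := convex_uIcc x y
  have hD₀ : 0 ≤ D := (norm_nonneg _).trans (hD x Set.left_mem_uIcc)
  have hderiv : ∀ z, HasDerivAt (fun z => f' z - (z - x) • f'' x) (f'' z - f'' x) z := fun z => by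
    simpa using (hf' z).fun_sub (((hasDerivAt_id z).sub_const x).smul_const (f'' x))
  have hfirst : ∀ z ∈ Set.uIcc x y, ‖f' z - (z - x) • f'' x - f' x‖ ≤ D * |y - x| := by
    intro z hz
    have := hconvex.norm_image_sub_le_of_norm_hasDerivWithin_le
      (fun z _ => (hderiv z).hasDerivWithinAt) hD Set.left_mem_uIcc hz
    simp only [sub_self, zero_smul, sub_zero, Real.norm_eq_abs] at this
    exact this.trans (mul_le_mul_of_nonneg_left (Set.abs_sub_left_of_mem_uIcc hz) hD₀)
  have hremainder : ∀ z, HasDerivAt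
      (fun z => f z - (z - x) • f' x - ((z - x) ^ 2 / 2) • f'' x)
      (f' z - (z - x) • f'' x - f' x) z := fun z => by
    have hsub := (hasDerivAt_id z).sub_const x
    refine (((hf z).sub (hsub.smul_const (f' x))).sub
      (((hsub.pow 2).div_const 2).smul_const (f'' x))).congr_deriv ?_
    simp only [id]
    module
  have := hconvex.norm_image_sub_le_of_norm_hasDerivWithin_le
    (fun z _ => (hremainder z).hasDerivWithinAt) hfirst Set.left_mem_uIcc Set.right_mem_uIcc
  calc _ = ‖f y - (y - x) • f' x - ((y - x) ^ 2 / 2) • f'' x -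
        (f x - (x - x) • f' x - ((x - x) ^ 2 / 2) • f'' x)‖ := by congr 1; module
    _ ≤ D * |y - x| * |y - x| := this
    _ = D * (y - x) ^ 2 := by rw [mul_assoc, abs_mul_abs_self, sq]

lemma norm_sub_taylor_two_le_of_norm_sub_le (hf : ∀ x, HasDerivAt f (f' x) x)
    (hf' : ∀ x, HasDerivAt f' (f'' x) x) {x a b : ℝ} (hb : 0 ≤ b)
    (hmod : ∀ y, ‖f'' y - f'' x‖ ≤ a + b * (y - x) ^ 2) (y : ℝ) :
    ‖f y - f x - (y - x) • f' x - ((y - x) ^ 2 / 2) • f'' x‖ ≤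
      a * (y - x) ^ 2 + b * (y - x) ^ 4 := by
  have hD : ∀ z ∈ Set.uIcc x y, ‖f'' z - f'' x‖ ≤ a + b * (y - x) ^ 2 := fun z hz => by
    have : (z - x) ^ 2 ≤ (y - x) ^ 2 := sq_le_sq.2 (Set.abs_sub_left_of_mem_uIcc hz)
    exact (hmod z).trans (by gcongr)
  exact (norm_sub_taylor_two_le hf hf' hD).trans_eq (by ring)

end Taylor

section Moments

lemma integrable_sub_const_pow {Ω : Type*} {_ : MeasurableSpace Ω} {μ : Measure Ω}
    [IsFiniteMeasure μ] {X : Ω → ℝ} {k n : ℕ} (hkn : k ≤ n) (hX : MemLp X n μ) (m : ℝ) :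
    Integrable (fun ω => (X ω - m) ^ k) μ := by
  have hsub : MemLp (fun ω => X ω - m) k μ :=
    (hX.sub (memLp_const m)).mono_exponent (by exact_mod_cast hkn)
  refine (integrable_norm_iff (hsub.aestronglyMeasurable.pow k)).1 ?_
  simpa only [Pi.pow_apply, norm_pow] using hsub.integrable_norm_pow'

variable {E : Type*} [NormedAddCommGroup E] [NormedSpace ℝ E] [CompleteSpace E]
  {f f' f'' : ℝ → E} {μ : Measure ℝ} [IsProbabilityMeasure μ]

lemma integral_sub_sub_smul_sub_sq_smul (hμ : MemLp id 2 μ) (hf : Integrable f μ)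
    (c v w : E) :
    ∫ y, (f y - c - (y - μ[id]) • v - ((y - μ[id]) ^ 2 / 2) • w) ∂μ =
      ∫ y, f y ∂μ - c - (Var[id; μ] / 2) • w := by
  have hlin : Integrable (fun y => y - μ[id]) μ := by
    simpa only [pow_one] using
      integrable_sub_const_pow one_le_two (by exact_mod_cast hμ) μ[id]
  have hquad : Integrable (fun y => (y - μ[id]) ^ 2 / 2) μ :=
    (integrable_sub_const_pow le_rfl (by exact_mod_cast hμ) μ[id]).div_const 2
  have hmean : ∫ y, (y - μ[id]) ∂μ = 0 := by
    simpa only [centralMoment, pow_one] using! centralMoment_one (X := id) (μ := μ)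
  have hvar : ∫ y, (y - μ[id]) ^ 2 ∂μ = Var[id; μ] := (variance_eq_integral aemeasurable_id).symm
  have hconst : Integrable (fun _ => c) μ := integrable_const c
  rw [integral_sub (by fun_prop) (by fun_prop), integral_sub (by fun_prop) (by fun_prop),
    integral_sub hf hconst, integral_smul_const, integral_smul_const, integral_div, hmean, hvar,
    integral_const, probReal_univ, one_smul, zero_smul, sub_zero]

lemma norm_integral_sub_sub_variance_smul_le (hμ : MemLp id 4 μ)
    (hf : ∀ x, HasDerivAt f (f' x) x) (hf' : ∀ x, HasDerivAt f' (f'' x) x) {a b : ℝ} (hb : 0 ≤ b)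
    (hmod : ∀ y, ‖f'' y - f'' μ[id]‖ ≤ a + b * (y - μ[id]) ^ 2) :
    ‖∫ y, f y ∂μ - f μ[id] - (Var[id; μ] / 2) • f'' μ[id]‖ ≤
      a * Var[id; μ] + b * centralMoment id 4 μ := by
  set m : ℝ := μ[id]
  have hpow : ∀ k ≤ 4, Integrable (fun y => (y - m) ^ k) μ := fun k hk =>
    integrable_sub_const_pow hk (by exact_mod_cast hμ) m
  have hlin : Integrable (fun y => y - m) μ := by simpa only [pow_one] using hpow 1 (by norm_num)
  have hsq : Integrable (fun y => (y - m) ^ 2) μ := hpow 2 (by norm_num)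
  have hfourth : Integrable (fun y => (y - m) ^ 4) μ := hpow 4 le_rfl
  have hbound : Integrable (fun y => a * (y - m) ^ 2 + b * (y - m) ^ 4) μ := by fun_prop
  let R : ℝ → E := fun y => f y - f m - (y - m) • f' m - ((y - m) ^ 2 / 2) • f'' m
  have hR : ∀ y, ‖R y‖ ≤ a * (y - m) ^ 2 + b * (y - m) ^ 4 :=
    norm_sub_taylor_two_le_of_norm_sub_le hf hf' hb hmod
  have hf_cont : Continuous f := continuous_iff_continuousAt.2 fun x => (hf x).continuousAt
  have hR_int : Integrable R μ := hbound.mono' (by fun_prop) (.of_forall hR)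
  have hf_int : Integrable f μ := by
    have hf_eq : f = fun y => R y + ((y - m) ^ 2 / 2) • f'' m + (y - m) • f' m + f m := by
      funext y
      simp only [R, sub_add_cancel]
    rw [hf_eq]
    fun_prop
  calc ‖∫ y, f y ∂μ - f m - (Var[id; μ] / 2) • f'' m‖ = ‖∫ y, R y ∂μ‖ := by
        rw [← integral_sub_sub_smul_sub_sq_smul (hμ.mono_exponent (by norm_num)) hf_int _ (f' m)]
    _ ≤ ∫ y, (a * (y - m) ^ 2 + b * (y - m) ^ 4) ∂μ :=
        norm_integral_le_of_norm_le hbound (.of_forall hR)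
    _ = a * ∫ y, (y - m) ^ 2 ∂μ + b * ∫ y, (y - m) ^ 4 ∂μ := by
        rw [integral_add (by fun_prop) (by fun_prop), integral_const_mul, integral_const_mul]
    _ = a * Var[id; μ] + b * centralMoment id 4 μ := by
        rw [variance_eq_integral aemeasurable_id]
        rfl

end Moments

section Gaussian

lemma centralMoment_id_gaussianReal (m : ℝ) (v : NNReal) (n : ℕ) :
    centralMoment id n (gaussianReal m v) = √v ^ n * centralMoment id n (gaussianReal 0 1) := by
  have hmap : gaussianReal m v = (gaussianReal 0 1).map (fun u => √v * u + m) := by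
    rw [← Function.comp_def (fun u => u + m), ← Measure.map_map (by fun_prop) (by fun_prop),
      gaussianReal_map_const_mul, gaussianReal_map_add_const]
    congr
    · simp
    · ext; simp
  simp only [centralMoment, Pi.pow_apply, Pi.sub_apply, id, integral_id_gaussianReal]
  rw [hmap, integral_map (by fun_prop) (by fun_prop), ← integral_const_mul]
  simp only [add_sub_cancel_right, sub_zero, mul_pow]

lemma integral_gaussKernel_sub_smul {E : Type*} [NormedAddCommGroup E] [NormedSpace ℝ E]
    {t : ℝ} (ht : 0 < t) (f : ℝ → E) (x : ℝ) :
    ∫ τ, gaussKernel t (x - τ) • f τ = ∫ τ, f τ ∂(gaussianReal x t.toNNReal) := by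
  rw [integral_gaussianReal_eq_integral_smul (by simpa using ht)]
  congr with τ
  rw [gaussKernel, gaussianPDFReal, Real.coe_toNNReal t ht.le, ← neg_sub τ x, neg_sq]

end Gaussian

section Generator

lemma tendsto_eLpNorm_zero_of_norm_le_mul {ι α E E' : Type*} {_ : MeasurableSpace α}
    {μ : Measure α} [NormedAddCommGroup E] [NormedAddCommGroup E'] {l : Filter ι} {p : ENNReal}
    {F : ι → α → E} {g : α → E'} (hg : MemLp g p μ)
    (hF : ∀ ε > 0, ∀ᶠ i in l, ∀ᵐ x ∂μ, ‖F i x‖ ≤ ε * ‖g x‖) :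
    Tendsto (fun i => eLpNorm (F i) p μ) l (𝓝 0) := by
  have hscale : Tendsto (fun ε => ENNReal.ofReal ε * eLpNorm g p μ) (𝓝[>] 0) (𝓝 0) := by
    have hofReal : Tendsto ENNReal.ofReal (𝓝[>] 0) (𝓝 0) := by
      simpa using (ENNReal.continuous_ofReal.tendsto 0).mono_left nhdsWithin_le_nhds
    simpa using ENNReal.Tendsto.mul_const hofReal (.inr hg.eLpNorm_ne_top)
  refine ENNReal.tendsto_nhds_zero.2 fun η hη => ?_
  obtain ⟨ε, hεη, hε⟩ :=
    ((ENNReal.tendsto_nhds_zero.1 hscale η hη).and self_mem_nhdsWithin).exists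
  filter_upwards [hF ε hε] with i hi
  exact (eLpNorm_le_mul_eLpNorm_of_ae_le_mul hi p).trans hεη

lemma memLp_inv_one_add_sq {p : ENNReal} (hp : 1 ≤ p) :
    MemLp (fun x : ℝ => (1 + x ^ 2)⁻¹) p := by
  have hcont : Continuous fun x : ℝ => (1 + x ^ 2)⁻¹ :=
    .inv₀ (by fun_prop) fun x => by positivity
  have hle : ∀ x : ℝ, ‖(1 + x ^ 2)⁻¹‖ ≤ 1 := fun x => by
    rw [Real.norm_of_nonneg (by positivity)]
    exact inv_le_one_of_one_le₀ (le_add_of_nonneg_right (sq_nonneg x))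
  rcases eq_or_ne p ⊤ with rfl | htop
  · exact memLp_top_of_bound hcont.aestronglyMeasurable 1 (.of_forall hle)
  have hp' : 1 ≤ p.toReal := by simpa using ENNReal.toReal_mono htop hp
  refine (integrable_norm_rpow_iff hcont.aestronglyMeasurable (by positivity) htop).1 ?_
  refine integrable_inv_one_add_sq.norm.mono' (by fun_prop (disch := positivity))
    (.of_forall fun x => ?_)
  rw [Real.norm_of_nonneg (by positivity)]
  exact Real.rpow_le_self_of_le_one (norm_nonneg _) (hle x) hp'

variable {E : Type*} [NormedAddCommGroup E] [NormedSpace ℝ E] [CompleteSpace E] {f : ℝ → E}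

lemma norm_gaussKernel_quotient_sub_le {f' f'' : ℝ → E} (hf : ∀ x, HasDerivAt f (f' x) x)
    (hf' : ∀ x, HasDerivAt f' (f'' x) x) {x a b : ℝ} (hb : 0 ≤ b)
    (hmod : ∀ y, ‖f'' y - f'' x‖ ≤ a + b * (y - x) ^ 2) {t : ℝ} (ht : 0 < t) :
    ‖t⁻¹ • ((∫ τ, gaussKernel t (x - τ) • f τ) - f x) - (1 / 2 : ℝ) • f'' x‖ ≤
      a + b * centralMoment id 4 (gaussianReal 0 1) * t := by
  have hmean : ∫ y, id y ∂(gaussianReal x t.toNNReal) = x := integral_id_gaussianReal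
  have hfourth : √t ^ 4 = t ^ 2 := by rw [show 4 = 2 * 2 from rfl, pow_mul, Real.sq_sqrt ht.le]
  have htaylor := norm_integral_sub_sub_variance_smul_le (μ := gaussianReal x t.toNNReal)
    (memLp_id_gaussianReal 4) hf hf' hb (by simpa only [hmean] using hmod)
  rw [hmean, variance_id_gaussianReal, centralMoment_id_gaussianReal, Real.coe_toNNReal t ht.le,
    hfourth] at htaylor
  calc _ = ‖t⁻¹ • ((∫ τ, f τ ∂(gaussianReal x t.toNNReal)) - f x - (t / 2) • f'' x)‖ := by
        rw [integral_gaussKernel_sub_smul ht, smul_sub t⁻¹ _ ((t / 2) • f'' x), smul_smul]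
        congr 3
        field_simp
    _ ≤ t⁻¹ * (a * t + b * (t ^ 2 * centralMoment id 4 (gaussianReal 0 1))) := by
        rw [norm_smul_of_nonneg (by positivity)]
        gcongr
    _ = _ := by field_simp

theorem gauss_semigroup_generator_general (hf : ContDiff ℝ 2 f)
    (hdecay : Tendsto (fun x => (1 + x ^ 2) • deriv (deriv f) x) (cocompact ℝ) (𝓝 0))
    {p : ENNReal} (hp : 1 ≤ p) :
    Tendsto
      (fun t : ℝ => eLpNorm
        (fun x => t⁻¹ • ((∫ τ, gaussKernel t (x - τ) • f τ) - f x) -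
          (1 / 2 : ℝ) • deriv (deriv f) x) p volume)
      (𝓝[>] 0) (𝓝 0) := by
  have hf' : ContDiff ℝ 1 (deriv f) := (contDiff_succ_iff_deriv.1 hf).2.2
  have hderiv : ∀ x, HasDerivAt f (deriv f x) x := fun x =>
    (hf.differentiable two_ne_zero x).hasDerivAt
  have hderiv' : ∀ x, HasDerivAt (deriv f) (deriv (deriv f) x) x := fun x =>
    (hf'.differentiable one_ne_zero x).hasDerivAt
  refine tendsto_eLpNorm_zero_of_norm_le_mul (memLp_inv_one_add_sq hp) fun ε hε => ?_
  obtain ⟨C, hC, hmod⟩ := exists_norm_sub_le_mul_inv_one_add_sq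
    (hf'.continuous_deriv le_rfl) hdecay (half_pos hε)
  set K := centralMoment id 4 (gaussianReal 0 1)
  have hsmall : ∀ᶠ t in 𝓝[>] 0, C * K * t < ε / 2 :=
    nhdsWithin_le_nhds <| (by fun_prop : Continuous fun t => C * K * t).tendsto' 0 0 (by simp)
      |>.eventually_lt_const (half_pos hε)
  filter_upwards [hsmall, self_mem_nhdsWithin] with t ht_small ht
  refine .of_forall fun x => ?_
  have hw : 0 ≤ (1 + x ^ 2)⁻¹ := by positivity
  have hx := norm_gaussKernel_quotient_sub_le hderiv hderiv' (mul_nonneg hC hw)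
    (fun y => (hmod x y).trans_eq (by ring)) ht (a := ε / 2 * (1 + x ^ 2)⁻¹)
  calc _ ≤ ε / 2 * (1 + x ^ 2)⁻¹ + C * (1 + x ^ 2)⁻¹ * K * t := hx
    _ = (ε / 2 + C * K * t) * (1 + x ^ 2)⁻¹ := by ring
    _ ≤ ε * ‖(1 + x ^ 2)⁻¹‖ := by
      rw [Real.norm_of_nonneg hw]
      gcongr
      linarith

end Generator

/-- For smooth compactly supported `f : ℝ → ℂ`,
`‖(N_t ⋆ f − f)/t − (1/2)f″‖₂ → 0` as `t → 0⁺`; i.e. the generator `−A` of the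
Gauss–Weierstrass semigroup satisfies `Af = −(1/2)f″` on such functions. -/
theorem gauss_semigroup_generator
    (f : ℝ → ℂ) (hsmooth : ContDiff ℝ (⊤ : ℕ∞) f) (hsupp : HasCompactSupport f) :
    Tendsto
      (fun t : ℝ =>
        eLpNorm
          (fun x : ℝ =>
            ((∫ τ : ℝ, (gaussKernel t (x - τ) : ℂ) * f τ) - f x) / (t : ℂ) -
              (1 / 2 : ℂ) * deriv (deriv f) x)
          2 volume)
      (𝓝[>] 0) (𝓝 0) := by
  have hdecay := (hsupp.deriv.deriv.smul_left (f := fun x : ℝ => 1 + x ^ 2)).is_zero_at_infty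
  simpa [div_eq_inv_mul] using
    gauss_semigroup_generator_general (contDiff_infty.1 hsmooth 2) hdecay one_le_two
end

section
/- Let α ∈ (0,1), let d ∈ ℝ, let x < d, and let f : ℝ → ℂ be a Lipschitz function with f(t) = 0 for all t ≥ d. Then the integrals below converge absolutely and (1/Γ(−α))·∫₀^∞ (f(x + t) − f(x))·t^{−1−α} dt = (α/Γ(1−α))·∫_x^d (f(x) − f(t))·(t − x)^{−1−α} dt + f(x)·(d − x)^{−α}/Γ(1−α), where Γ(−α) = −Γ(1−α)/α. -/
open MeasureTheory Real Set

/-! Since `f` vanishes beyond `d`, the Balakrishnan integrand equals `-f x * t ^ (-1 - α)` for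
`t ≥ d - x`, and the integral of this tail is the boundary term `-f x * (d - x) ^ (-α) / α`. On
`(0, d - x)` the substitution `t ↦ x + t` gives minus the Marchaud integral, and the functional
equation `Γ(1 - α) = -α Γ(-α)` matches the normalising constants. Near `0`, a Hölder bound
of exponent `r > α` at the point `x` dominates the integrand by a multiple of `t ^ (r - 1 - α)`. -/

lemma Gamma_neg_eq_neg_Gamma_one_sub_div {α : ℝ} (hα : α ≠ 0) :
    Real.Gamma (-α) = -Real.Gamma (1 - α) / α := by
  have h := Real.Gamma_add_one (neg_ne_zero.mpr hα)
  rw [neg_add_eq_sub] at h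
  rw [h, neg_mul, neg_neg, mul_div_cancel_left₀ _ hα]

lemma integral_Ici_rpow_neg_one_sub {α c : ℝ} (hα : 0 < α) (hc : 0 < c) :
    ∫ t in Ici c, t ^ (-1 - α) = c ^ (-α) / α := by
  rw [integral_Ici_eq_integral_Ioi, integral_Ioi_rpow_of_lt (by linarith) hc,
    show -1 - α + 1 = -α by ring, neg_div_neg_eq]

section Translation

variable {E : Type*} [NormedAddCommGroup E]

lemma integrableOn_Ioo_comp_const_add_iff (g : ℝ → E) (a b c : ℝ) :
    IntegrableOn (fun t ↦ g (a + t)) (Ioo (b - a) (c - a)) ↔ IntegrableOn g (Ioo b c) := by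
  rw [← preimage_const_add_Ioo]
  exact (measurePreserving_add_left volume a).integrableOn_comp_preimage
    (measurableEmbedding_addLeft a)

lemma setIntegral_Ioo_comp_const_add [NormedSpace ℝ E] (g : ℝ → E) (a b c : ℝ) :
    ∫ t in Ioo (b - a) (c - a), g (a + t) = ∫ t in Ioo b c, g t := by
  rw [← preimage_const_add_Ioo]
  exact (measurePreserving_add_left volume a).setIntegral_preimage_emb
    (measurableEmbedding_addLeft a) g _

end Translation

lemma integrableOn_Ioo_sub_rpow {p : ℝ} (hp : -1 < p) {a b : ℝ} (hab : a < b) :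
    IntegrableOn (fun t ↦ (t - a) ^ p) (Ioo a b) := by
  rw [← integrableOn_Ioo_comp_const_add_iff _ a a b, sub_self]
  simpa only [add_sub_cancel_left] using
    (intervalIntegral.integrableOn_Ioo_rpow_iff (sub_pos.mpr hab)).mpr hp

section Marchaud

variable {E : Type*} [NormedAddCommGroup E] [NormedSpace ℝ E] {f : ℝ → E} {α d x : ℝ}

lemma integrableOn_Ioo_sub_rpow_smul_sub {C r : ℝ} (hxd : x < d) (hαr : α < r)
    (hfm : AEStronglyMeasurable f (volume.restrict (Ioo x d)))
    (hf : ∀ t ∈ Ioo x d, ‖f t - f x‖ ≤ C * (t - x) ^ r) :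
    IntegrableOn (fun t ↦ (t - x) ^ (-1 - α) • (f x - f t)) (Ioo x d) := by
  have hdom : IntegrableOn (fun t ↦ C * (t - x) ^ (r + (-1 - α))) (Ioo x d) :=
    (integrableOn_Ioo_sub_rpow (by linarith) hxd).const_mul C
  have hkernel : Measurable fun t : ℝ ↦ (t - x) ^ (-1 - α) := by fun_prop
  refine hdom.mono' (hkernel.aestronglyMeasurable.smul (aestronglyMeasurable_const.sub hfm))
    (ae_restrict_of_forall_mem measurableSet_Ioo fun t ht ↦ ?_)
  have htx : 0 < t - x := sub_pos.mpr ht.1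
  calc ‖(t - x) ^ (-1 - α) • (f x - f t)‖
      = ‖f t - f x‖ * (t - x) ^ (-1 - α) := by
        rw [norm_smul, norm_of_nonneg (rpow_nonneg htx.le _), norm_sub_rev, mul_comm]
    _ ≤ C * (t - x) ^ r * (t - x) ^ (-1 - α) := by gcongr; exact hf t ht
    _ = C * (t - x) ^ (r + (-1 - α)) := by rw [mul_assoc, ← rpow_add htx]

lemma sub_rpow_smul_sub_comp_const_add (f : ℝ → E) (α x t : ℝ) :
    (x + t - x) ^ (-1 - α) • (f x - f (x + t)) = -(t ^ (-1 - α) • (f (x + t) - f x)) := by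
  rw [add_sub_cancel_left, ← smul_neg, neg_sub]

lemma integrableOn_Ioo_rpow_smul_increment_iff :
    IntegrableOn (fun t ↦ t ^ (-1 - α) • (f (x + t) - f x)) (Ioo 0 (d - x)) ↔
      IntegrableOn (fun t ↦ (t - x) ^ (-1 - α) • (f x - f t)) (Ioo x d) := by
  rw [← integrableOn_Ioo_comp_const_add_iff _ x x d, sub_self]
  simp only [sub_rpow_smul_sub_comp_const_add]
  exact integrable_neg_iff.symm

lemma setIntegral_Ioo_rpow_smul_increment :
    ∫ t in Ioo 0 (d - x), t ^ (-1 - α) • (f (x + t) - f x) =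
      -∫ t in Ioo x d, (t - x) ^ (-1 - α) • (f x - f t) := by
  rw [← setIntegral_Ioo_comp_const_add _ x x d, sub_self]
  simp only [sub_rpow_smul_sub_comp_const_add, integral_neg, neg_neg]

lemma eqOn_Ici_rpow_smul_increment (hf0 : ∀ t, d ≤ t → f t = 0) :
    EqOn (fun t ↦ t ^ (-1 - α) • (f (x + t) - f x)) (fun t ↦ t ^ (-1 - α) • -f x)
      (Ici (d - x)) := by
  intro t ht
  simp only [hf0 (x + t) (sub_le_iff_le_add'.mp ht), zero_sub]

lemma integrableOn_Ici_rpow_smul_increment (hα : 0 < α) (hxd : x < d)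
    (hf0 : ∀ t, d ≤ t → f t = 0) :
    IntegrableOn (fun t ↦ t ^ (-1 - α) • (f (x + t) - f x)) (Ici (d - x)) := by
  rw [integrableOn_congr_fun (eqOn_Ici_rpow_smul_increment hf0) measurableSet_Ici,
    integrableOn_Ici_iff_integrableOn_Ioi]
  exact (integrableOn_Ioi_rpow_of_lt (by linarith) (sub_pos.mpr hxd)).smul_const _

lemma setIntegral_Ici_rpow_smul_increment [CompleteSpace E] (hα : 0 < α) (hxd : x < d)
    (hf0 : ∀ t, d ≤ t → f t = 0) :
    ∫ t in Ici (d - x), t ^ (-1 - α) • (f (x + t) - f x) = -(((d - x) ^ (-α) / α) • f x) := by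
  rw [setIntegral_congr_fun measurableSet_Ici (eqOn_Ici_rpow_smul_increment hf0),
    integral_smul_const, integral_Ici_rpow_neg_one_sub hα (sub_pos.mpr hxd), smul_neg]

/-- When `α` is a positive integer, each `1 / Γ` is `1 / 0 = 0` in Lean, which is also the value
of the entire function `1 / Γ` at that pole of `Γ`. -/
theorem balakrishnan_eq_marchaud_general [CompleteSpace E] {C r : ℝ} (hα : 0 < α) (hαr : α < r)
    (hxd : x < d) (hfm : AEStronglyMeasurable f (volume.restrict (Ioo x d)))
    (hf : ∀ t ∈ Ioo x d, ‖f t - f x‖ ≤ C * (t - x) ^ r) (hf0 : ∀ t, d ≤ t → f t = 0) :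
    Real.Gamma (-α) = -Real.Gamma (1 - α) / α ∧
    IntegrableOn (fun t ↦ t ^ (-1 - α) • (f (x + t) - f x)) (Ioi 0) ∧
    IntegrableOn (fun t ↦ (t - x) ^ (-1 - α) • (f x - f t)) (Ioo x d) ∧
    (1 / Real.Gamma (-α)) • ∫ t in Ioi 0, t ^ (-1 - α) • (f (x + t) - f x) =
      (α / Real.Gamma (1 - α)) • (∫ t in Ioo x d, (t - x) ^ (-1 - α) • (f x - f t)) +
        ((d - x) ^ (-α) / Real.Gamma (1 - α)) • f x := by
  have hΓ := Gamma_neg_eq_neg_Gamma_one_sub_div hα.ne'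
  have hmarchaud := integrableOn_Ioo_sub_rpow_smul_sub hxd hαr hfm hf
  have hnear := integrableOn_Ioo_rpow_smul_increment_iff.mpr hmarchaud
  have htail := integrableOn_Ici_rpow_smul_increment hα hxd hf0
  have hunion : Ioo 0 (d - x) ∪ Ici (d - x) = Ioi 0 := Ioo_union_Ici_eq_Ioi (sub_pos.mpr hxd)
  have hdisj : Disjoint (Ioo 0 (d - x)) (Ici (d - x)) :=
    disjoint_left.mpr fun _ ht ht' ↦ ht.2.not_ge ht'
  refine ⟨hΓ, hunion ▸ hnear.union htail, hmarchaud, ?_⟩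
  rw [← hunion, setIntegral_union hdisj measurableSet_Ici hnear htail,
    setIntegral_Ioo_rpow_smul_increment, setIntegral_Ici_rpow_smul_increment hα hxd hf0, hΓ]
  match_scalars <;> field_simp

end Marchaud

/-- For `α ∈ (0,1)`, `x < d`, and a Lipschitz `f : ℝ → ℂ` vanishing on
`[d, ∞)`, the Balakrishnan integral equals the Marchaud‑type (Kipriyanov) fractional
derivative:
`(1/Γ(−α)) ∫₀^∞ (f(x+t) − f(x)) t^{−1−α} dt
  = (α/Γ(1−α)) ∫_x^d (f(x) − f(t))(t−x)^{−1−α} dt + f(x)(d−x)^{−α}/Γ(1−α)`,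
both integrals converging absolutely, where `Γ(−α) = −Γ(1−α)/α`. -/
theorem balakrishnan_eq_marchaud
    (α : ℝ) (hα : α ∈ Ioo (0 : ℝ) 1) (d x : ℝ) (hxd : x < d)
    (f : ℝ → ℂ) (K : NNReal) (hf : LipschitzWith K f)
    (hf0 : ∀ t : ℝ, d ≤ t → f t = 0) :
    Real.Gamma (-α) = -Real.Gamma (1 - α) / α ∧
    IntegrableOn (fun t : ℝ => (f (x + t) - f x) * ((t ^ (-1 - α) : ℝ) : ℂ))
      (Ioi (0 : ℝ)) volume ∧
    IntegrableOn (fun t : ℝ => (f x - f t) * (((t - x) ^ (-1 - α) : ℝ) : ℂ))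
      (Ioo x d) volume ∧
    ((1 / Real.Gamma (-α) : ℝ) : ℂ) *
        ∫ t in Ioi (0 : ℝ), (f (x + t) - f x) * ((t ^ (-1 - α) : ℝ) : ℂ) =
      ((α / Real.Gamma (1 - α) : ℝ) : ℂ) *
          (∫ t in Ioo x d, (f x - f t) * (((t - x) ^ (-1 - α) : ℝ) : ℂ)) +
        f x * ((((d - x) ^ (-α) : ℝ) / Real.Gamma (1 - α) : ℝ) : ℂ) := by
  have hbound : ∀ t ∈ Ioo x d, ‖f t - f x‖ ≤ K * (t - x) ^ (1 : ℝ) := fun t ht ↦ by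
    simpa only [rpow_one, norm_of_nonneg (sub_pos.mpr ht.1).le] using hf.norm_sub_le t x
  simpa only [Complex.real_smul, mul_comm] using balakrishnan_eq_marchaud_general hα.1 hα.2 hxd
    hf.continuous.aestronglyMeasurable hbound hf0
end
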